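/- arXiv:1005.4277 — 2 statements merged into one kernel-verified Lean document; each statement's English description precedes it below -/
import Mathlib

section
/- For all complex numbers a, b, every integer c with 0 ≤ c ≤ n−1, and either (consistent) choice of sign ±, the following identity holds: Σ_{s=0}^{c} ξ^{±(a+b−c+2)s} · [a−s¦a−c] · [b+s¦b] = ξ^{±(b+1)c} · [a+b+1¦a+b−c+1]. -/
open Complex Finset Filter
open scoped Matrix Kronecker Real

noncomputable section

/-- `ξ^a = exp(π √-1 a / n)` for the `2n`-th root of unity `ξ = exp(π √-1/n)`. -/
def xic (n : ℕ) (a : ℂ) : ℂ := Complex.exp (Real.pi * Complex.I * a / n)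

/-- `{a} = ξ^a - ξ^{-a}`. -/
def qn (n : ℕ) (a : ℂ) : ℂ := xic n a - xic n (-a)

/-- `{k}! = {1}{2}⋯{k}`. -/
def qfac (n : ℕ) (k : ℕ) : ℂ := ∏ j ∈ Finset.range k, qn n ((j : ℂ) + 1)

-- The quantum binomial `[a¦b]`, defined (and nonzero) only when `a - b ∈ {0,1,…,n-1}`.
open Classical in
def qbin (n : ℕ) (a b : ℂ) : ℂ :=
  if h : ∃ k : ℕ, k < n ∧ a - b = (k : ℂ) then
    ∏ j ∈ Finset.range h.choose, qn n (a - (j : ℂ)) / qn n (a - b - (j : ℂ))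
  else 0

/-- `[a] = {a}/{1}`. -/
def qint (n : ℕ) (a : ℂ) : ℂ := qn n a / qn n 1

/-- `a` is not a half-integer. -/
def NotHalfInt (a : ℂ) : Prop := ∀ m : ℤ, a ≠ (m : ℂ) / 2

/-- `x ∈ {0, 1, …, n-1}` (as a complex number). -/
def InZn (n : ℕ) (x : ℂ) : Prop := ∃ k : ℕ, k < n ∧ x = (k : ℂ)

/-- The matrix of `E` on `V^a = ℂ^n`: `E e_j = [j] e_{j-1}` (independent of `a`). -/
def Emat (n : ℕ) : Matrix (Fin n) (Fin n) ℂ :=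
  Matrix.of fun i j => if (j : ℕ) = (i : ℕ) + 1 then qint n ((j : ℕ) : ℂ) else 0

/-- The matrix of `F` on `V^a`: `F e_j = [2a-j] e_{j+1}` (with `e_n = 0`). -/
def Fmat (n : ℕ) (a : ℂ) : Matrix (Fin n) (Fin n) ℂ :=
  Matrix.of fun i j => if (i : ℕ) = (j : ℕ) + 1 then qint n (2 * a - ((j : ℕ) : ℂ)) else 0

/-- The matrix of `K` on `V^a`: `K e_j = ξ^{a-j} e_j`. -/
def Kmat (n : ℕ) (a : ℂ) : Matrix (Fin n) (Fin n) ℂ :=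
  Matrix.of fun i j => if i = j then xic n (a - ((i : ℕ) : ℂ)) else 0

/-- The matrix of `K⁻¹` on `V^a`. -/
def Kinvmat (n : ℕ) (a : ℂ) : Matrix (Fin n) (Fin n) ℂ :=
  Matrix.of fun i j => if i = j then xic n (-(a - ((i : ℕ) : ℂ))) else 0

/-- The `R`-matrix `R_{a,b} : V^a ⊗ V^b → V^b ⊗ V^a`:
`R(e_u ⊗ e_v) = Σ_m {m}! ξ^{2(a-u)(b-v) - m(a-b-u+v) - m(m+1)/2} [u¦u-m] [2b-v¦2b-v-m]
e_{v+m} ⊗ e_{u-m}`; the entry at row `(h,k)`, column `(u,v)` is the coefficient of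
`e_h ⊗ e_k`, nonzero only when `h + k = u + v` and `h ≥ v` (with `m = h - v`). -/
def Rmat (n : ℕ) (a b : ℂ) : Matrix (Fin n × Fin n) (Fin n × Fin n) ℂ :=
  Matrix.of fun p q =>
    if ((p.1 : ℕ) + (p.2 : ℕ) = (q.1 : ℕ) + (q.2 : ℕ)) ∧ ((q.2 : ℕ) ≤ (p.1 : ℕ)) then
      (fun m : ℕ =>
        qfac n m *
        xic n (2 * (a - ((q.1 : ℕ) : ℂ)) * (b - ((q.2 : ℕ) : ℂ))
            - (m : ℂ) * (a - b - ((q.1 : ℕ) : ℂ) + ((q.2 : ℕ) : ℂ))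
            - (m : ℂ) * ((m : ℂ) + 1) / 2) *
        qbin n ((q.1 : ℕ) : ℂ) (((q.1 : ℕ) : ℂ) - (m : ℂ)) *
        qbin n (2 * b - ((q.2 : ℕ) : ℂ)) (2 * b - ((q.2 : ℕ) : ℂ) - (m : ℂ)))
      ((p.1 : ℕ) - (q.2 : ℕ))
    else 0

/-- The Clebsch-Gordan quantum coefficient `C^{a,b,c}_{u,v,t}`. -/
def CG (n : ℕ) (a b c : ℂ) (u v t : ℕ) : ℂ :=
  Complex.exp (Real.pi * Complex.I * (c - a - b) / 2) *
  (-1 : ℂ) ^ ((v : ℤ) - (t : ℤ)) *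
  xic n (((v : ℂ) * (2 * b - (v : ℂ) + 1) - (u : ℂ) * (2 * a - (u : ℂ) + 1)) / 2) *
  (qbin n (2 * c) (2 * c - (t : ℂ)))⁻¹ *
  qbin n (2 * c) (a + b + c - ((n : ℂ) - 1)) *
  ∑ z ∈ Finset.range (t + 1),
    (-1 : ℂ) ^ z * xic n ((2 * (z : ℂ) - (t : ℂ)) * (2 * c - (t : ℂ) + 1) / 2) *
    qbin n (a + b - c) ((u : ℂ) - (z : ℂ)) *
    qbin n (2 * a - (u : ℂ) + (z : ℂ)) (2 * a - (u : ℂ)) *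
    qbin n (2 * b - (v : ℂ) + ((t : ℂ) - (z : ℂ))) (2 * b - (v : ℂ))

-- The inclusion `Y_c^{a,b} : V^c → V^a ⊗ V^b`.
open Classical in
def Yinc (n : ℕ) (a b c : ℂ) : Matrix (Fin n × Fin n) (Fin n) ℂ :=
  Matrix.of fun p t =>
    if ((p.1 : ℕ) : ℂ) + ((p.2 : ℕ) : ℂ) - ((t : ℕ) : ℂ) = a + b - c then
      CG n a b c (p.1 : ℕ) (p.2 : ℕ) (t : ℕ)
    else 0

-- The projection `Y_{a,b}^c : V^a ⊗ V^b → V^c`.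
open Classical in
def Yproj (n : ℕ) (a b c : ℂ) : Matrix (Fin n) (Fin n × Fin n) ℂ :=
  Matrix.of fun t p =>
    if ((p.1 : ℕ) : ℂ) + ((p.2 : ℕ) : ℂ) - ((t : ℕ) : ℂ) = a + b - c then
      CG n ((n : ℂ) - 1 - b) ((n : ℂ) - 1 - a) ((n : ℂ) - 1 - c)
        (n - 1 - (p.2 : ℕ)) (n - 1 - (p.1 : ℕ)) (n - 1 - (t : ℕ))
    else 0

-- Extracts the natural number `k` with `x = k` (0 if there is none).
open Classical in
def natIdx (x : ℂ) : ℕ := if h : ∃ k : ℕ, x = (k : ℂ) then h.choose else 0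

/-- The `SL(2,ℂ)` quantum 6j-symbol `{a b e; d c f}_ξ`. -/
def sixj (n : ℕ) (a b e d c f : ℂ) : ℂ :=
  (-1 : ℂ) ^ (n - 1 + natIdx (a + f - c)) *
  (qbin n (2 * f + (n : ℂ)) (2 * f + 1))⁻¹ *
  (qfac n (natIdx (d + e - c)) * qfac n (natIdx (a + b - e)) /
    (qfac n (natIdx (b + d - f)) * qfac n (natIdx (a + f - c)))) *
  qbin n (2 * e) (a + b + e + 1 - (n : ℂ)) *
  (qbin n (2 * e) (e + c - d))⁻¹ *
  ∑ z ∈ Finset.Icc (natIdx (d + e - c) - natIdx (b + d - f))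
      (min (natIdx (d + e - c)) (natIdx (a + f - c))),
    (-1 : ℂ) ^ z * qbin n (a + f + c + 1) (2 * c + (z : ℂ) + 1) *
    qbin n ((a + c - f) + (z : ℂ)) (a + c - f) *
    qbin n ((b + f - d) + (d + e - c) - (z : ℂ)) (b + f - d) *
    qbin n ((d + c - e) + (z : ℂ)) (d + f - b)

/-- The tetrahedral symbol `{a b e; d c f}_tet = {a b e; d c f}_ξ · [2f+n¦2f+1]`. -/
def sixjtet (n : ℕ) (a b e d c f : ℂ) : ℂ :=
  sixj n a b e d c f * qbin n (2 * f + (n : ℂ)) (2 * f + 1)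

/-- The Lobachevsky function `Λ(x) = -∫_0^x log|2 sin t| dt`. -/
def lob (x : ℝ) : ℝ := -∫ t in (0 : ℝ)..x, Real.log |2 * Real.sin t|

/-- A triple of integers is admissible. -/
def Admissible (n : ℕ) (i j k : ℤ) : Prop :=
  0 < i ∧ 0 < j ∧ 0 < k ∧ i < (n : ℤ) - 1 ∧ j < (n : ℤ) - 1 ∧ k < (n : ℤ) - 1 ∧
  (n : ℤ) - 1 < i + j + k ∧ i + j + k < 2 * ((n : ℤ) - 1) ∧
  0 < i + j - k ∧ 0 < j + k - i ∧ 0 < k + i - j ∧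
  i + j - k < (n : ℤ) - 1 ∧ j + k - i < (n : ℤ) - 1 ∧ k + i - j < (n : ℤ) - 1


lemma xic_add (n : ℕ) (x y : ℂ) : xic n (x + y) = xic n x * xic n y := by
  unfold xic
  rw [← Complex.exp_add]
  congr 1
  ring

lemma qn_zero (n : ℕ) : qn n 0 = 0 := by simp [qn]

/-- Addition formula for `{x + y}`, for either sign. -/
lemma qn_add (n : ℕ) (ε : ℂ) (hε : ε = 1 ∨ ε = -1) (x y : ℂ) :
    qn n (x + y) = xic n (ε * y) * qn n x + xic n (-(ε * x)) * qn n y := by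
  unfold qn
  rcases hε with rfl | rfl
  · simp only [mul_sub, ← xic_add]
    ring_nf
  · simp only [mul_sub, ← xic_add]
    ring_nf

lemma qn_ne_zero (n k : ℕ) (h0 : 0 < k) (hk : k < n) : qn n (k : ℂ) ≠ 0 := by
  intro h
  have hn : (n : ℂ) ≠ 0 := by
    have : n ≠ 0 := by omega
    exact_mod_cast this
  have hpi : (Real.pi : ℂ) ≠ 0 := by exact_mod_cast Real.pi_ne_zero
  unfold qn xic at h
  rw [sub_eq_zero, Complex.exp_eq_exp_iff_exists_int] at h
  obtain ⟨m, hm⟩ := h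
  have h2 : (Real.pi * Complex.I) * (2 * (k : ℂ)) = (Real.pi * Complex.I) * (2 * (m * n)) := by
    field_simp at hm
    linear_combination (Real.pi * Complex.I) * hm
  have h3 := mul_left_cancel₀ (mul_ne_zero hpi Complex.I_ne_zero) h2
  have h4 : (k : ℂ) = m * n := by linear_combination h3 / 2
  have h5 : (k : ℤ) = m * n := by exact_mod_cast h4
  have h6 : (n : ℤ) ∣ k := ⟨m, by rw [h5]; ring⟩
  have h7 : n ∣ k := by exact_mod_cast h6
  exact absurd (Nat.le_of_dvd h0 h7) (by omega)

/-- `[d+k¦d]` with an explicit natural number `k`. -/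
def qB (n k : ℕ) (d : ℂ) : ℂ := (∏ j ∈ Finset.range k, qn n (d + (j : ℂ) + 1)) / qfac n k

lemma qbin_eq (n k : ℕ) (hk : k < n) (x y : ℂ) (h : x = y + k) : qbin n x y = qB n k y := by
  have hex : ∃ k : ℕ, k < n ∧ x - y = (k : ℂ) := ⟨k, hk, by rw [h]; ring⟩
  have hch : hex.choose = k := by
    have h1 := hex.choose_spec.2
    have h2 : ((hex.choose : ℕ) : ℂ) = (k : ℂ) := by rw [← h1, h]; ring
    exact_mod_cast h2
  unfold qbin qB qfac
  rw [dif_pos hex, hch, Finset.prod_div_distrib]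
  congr 1
  · rw [← Finset.prod_range_reflect]
    refine Finset.prod_congr rfl fun j hj => ?_
    have hj := Finset.mem_range.1 hj
    obtain ⟨m, rfl⟩ : ∃ m, k = j + 1 + m := ⟨k - (j + 1), by omega⟩
    have : j + 1 + m - 1 - j = m := by omega
    rw [this, h]
    congr 1
    push_cast
    ring
  · rw [← Finset.prod_range_reflect]
    refine Finset.prod_congr rfl fun j hj => ?_
    have hj := Finset.mem_range.1 hj
    obtain ⟨m, rfl⟩ : ∃ m, k = j + 1 + m := ⟨k - (j + 1), by omega⟩
    have : j + 1 + m - 1 - j = m := by omega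
    rw [this, h]
    congr 1
    push_cast
    ring

lemma qB_succ (n k : ℕ) (hk : k + 1 < n) (d : ℂ) :
    qn n ((k : ℂ) + 1) * qB n (k + 1) d = qn n (d + 1) * qB n k (d + 1) := by
  have hne : qn n ((k : ℂ) + 1) ≠ 0 := by
    have := qn_ne_zero n (k + 1) (by omega) hk
    simpa using this
  have hp : ∏ j ∈ Finset.range (k + 1), qn n (d + (j : ℂ) + 1)
      = (∏ j ∈ Finset.range k, qn n (d + 1 + (j : ℂ) + 1)) * qn n (d + 1) := by
    rw [Finset.prod_range_succ']
    congr 1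
    · refine Finset.prod_congr rfl fun j _ => ?_
      congr 1
      push_cast
      ring
    · simp
  have hq : qfac n (k + 1) = qfac n k * qn n ((k : ℂ) + 1) := by
    unfold qfac
    rw [Finset.prod_range_succ]
  unfold qB
  rw [hp, hq, mul_comm (qfac n k), ← div_div, mul_div_assoc', mul_div_assoc',
    mul_div_assoc', mul_div_cancel_left₀ _ hne, mul_comm]

/-- The summation identity in terms of `qB`. -/
lemma qB_sum (n : ℕ) (ε : ℂ) (hε : ε = 1 ∨ ε = -1) (c : ℕ) :
    c < n → ∀ d b : ℂ,
    ∑ p ∈ Finset.HasAntidiagonal.antidiagonal c, xic n (ε * (d + b + 2) * (p.1 : ℂ)) * qB n p.2 d * qB n p.1 b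
      = xic n (ε * (b + 1) * (c : ℂ)) * qB n c (d + b + 1) := by
  induction c with
  | zero => intro _ d b; simp [qB, qfac, xic]
  | succ c ih =>
    intro hc d b
    have hne : qn n ((c : ℂ) + 1) ≠ 0 := by
      have := qn_ne_zero n (c + 1) (by omega) hc
      simpa using this
    apply mul_left_cancel₀ hne
    have i1 := ih (by omega) (d + 1) b
    have i2 := ih (by omega) d (b + 1)
    have hsplit : qn n ((c : ℂ) + 1) * ∑ p ∈ Finset.HasAntidiagonal.antidiagonal (c + 1),
          xic n (ε * (d + b + 2) * (p.1 : ℂ)) * qB n p.2 d * qB n p.1 b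
        = ∑ p ∈ Finset.HasAntidiagonal.antidiagonal (c + 1),
            xic n (ε * (d + b + 2) * (p.1 : ℂ)) * xic n (ε * p.1) *
              (qn n (p.2 : ℂ) * qB n p.2 d) * qB n p.1 b
          + ∑ p ∈ Finset.HasAntidiagonal.antidiagonal (c + 1),
            xic n (ε * (d + b + 2) * (p.1 : ℂ)) * xic n (-(ε * p.2)) *
              qB n p.2 d * (qn n (p.1 : ℂ) * qB n p.1 b) := by
      rw [Finset.mul_sum, ← Finset.sum_add_distrib]
      refine Finset.sum_congr rfl fun p hp => ?_
      have hp := Finset.HasAntidiagonal.mem_antidiagonal.1 hp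
      have : ((c : ℂ) + 1) = (p.2 : ℂ) + (p.1 : ℂ) := by
        rw [add_comm (p.2 : ℂ)]
        exact_mod_cast hp.symm
      rw [this, qn_add n ε hε]
      ring
    have hA : ∑ p ∈ Finset.HasAntidiagonal.antidiagonal (c + 1),
            xic n (ε * (d + b + 2) * (p.1 : ℂ)) * xic n (ε * p.1) *
              (qn n (p.2 : ℂ) * qB n p.2 d) * qB n p.1 b
        = qn n (d + 1) * (xic n (ε * (b + 1) * (c : ℂ)) * qB n c (d + 1 + b + 1)) := by
      rw [← i1, Finset.Nat.sum_antidiagonal_succ', Finset.mul_sum]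
      simp only [Nat.cast_zero, qn_zero, zero_mul, mul_zero, zero_add, add_zero]
      refine Finset.sum_congr rfl fun p hp => ?_
      have hp := Finset.HasAntidiagonal.mem_antidiagonal.1 hp
      push_cast
      rw [qB_succ n p.2 (by omega), ← xic_add]
      have : ε * (d + b + 2) * (p.1 : ℂ) + ε * p.1 = ε * (d + 1 + b + 2) * (p.1 : ℂ) := by ring
      rw [this]
      ring
    have hB : ∑ p ∈ Finset.HasAntidiagonal.antidiagonal (c + 1),
            xic n (ε * (d + b + 2) * (p.1 : ℂ)) * xic n (-(ε * p.2)) *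
              qB n p.2 d * (qn n (p.1 : ℂ) * qB n p.1 b)
        = qn n (b + 1) * xic n (ε * (d + b + 2 - c)) *
          (xic n (ε * (b + 1 + 1) * (c : ℂ)) * qB n c (d + (b + 1) + 1)) := by
      rw [← i2, Finset.Nat.sum_antidiagonal_succ, Finset.mul_sum]
      simp only [Nat.cast_zero, qn_zero, zero_mul, mul_zero, zero_add, add_zero]
      refine Finset.sum_congr rfl fun p hp => ?_
      have hp := Finset.HasAntidiagonal.mem_antidiagonal.1 hp
      have hpc : (c : ℂ) = (p.1 : ℂ) + (p.2 : ℂ) := by exact_mod_cast hp.symm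
      push_cast
      rw [qB_succ n p.1 (by omega), ← xic_add]
      have : ε * (d + b + 2) * ((p.1 : ℂ) + 1) + -(ε * p.2)
          = ε * (d + b + 2 - c) + ε * (d + (b + 1) + 2) * (p.1 : ℂ) := by rw [hpc]; ring
      rw [this, xic_add]
      ring
    rw [hsplit, hA, hB]
    have e1 : d + 1 + b + 1 = d + b + 1 + 1 := by ring
    have e2 : d + (b + 1) + 1 = d + b + 1 + 1 := by ring
    rw [e1, e2]
    have hs := qB_succ n c hc (d + b + 1)
    push_cast
    rw [mul_left_comm (qn n ((c : ℂ) + 1)), hs]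
    have e3 : d + b + 1 + 1 = (b + 1) + (d + 1) := by ring
    have e3' : xic n (ε * (b + 1) * ((c : ℂ) + 1)) * qn n (d + b + 1 + 1)
        = xic n (ε * (b + 1) * (c : ℂ)) * qn n (d + 1)
          + xic n (ε * (d + b + 2 - c)) * xic n (ε * (b + 1 + 1) * (c : ℂ)) * qn n (b + 1) := by
      have e4 : ε * (b + 1) * ((c : ℂ) + 1) = ε * (b + 1) * c + ε * (b + 1) := by ring
      have e5 : ε * (b + 1) * ((c : ℂ) + 1) + ε * (d + 1)
          = ε * (d + b + 2 - c) + ε * (b + 1 + 1) * (c : ℂ) := by ring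
      have e6 : ε * (b + 1) * ((c : ℂ) + 1) + -(ε * (b + 1)) = ε * (b + 1) * (c : ℂ) := by ring
      rw [e3, qn_add n ε hε, mul_add, ← mul_assoc, ← mul_assoc, ← xic_add, ← xic_add, ← xic_add,
        e5, e6]
      ring
    linear_combination (-qB n c (d + b + 1 + 1)) * e3'

theorem binomial_summation_identity (n : ℕ) (hn : 2 ≤ n) (a b : ℂ) (c : ℕ)
    (hc : c ≤ n - 1) (ε : ℂ) (hε : ε = 1 ∨ ε = -1) :
    ∑ s ∈ Finset.range (c + 1),
        xic n (ε * (a + b - (c : ℂ) + 2) * (s : ℂ)) *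
          qbin n (a - (s : ℂ)) (a - (c : ℂ)) * qbin n (b + (s : ℂ)) b
      = xic n (ε * (b + 1) * (c : ℂ)) * qbin n (a + b + 1) (a + b - (c : ℂ) + 1) := by
  have hcn : c < n := by omega
  have h := qB_sum n ε hε c hcn (a - c) b
  rw [Finset.Nat.sum_antidiagonal_eq_sum_range_succ_mk] at h
  rw [qbin_eq n c hcn (a + b + 1) (a + b - (c : ℂ) + 1) (by ring)]
  have e : a + b - (c : ℂ) + 1 = a - c + b + 1 := by ring
  rw [e, ← h]
  refine Finset.sum_congr rfl fun s hs => ?_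
  have hs := Finset.mem_range.1 hs
  have hsc : s ≤ c := by omega
  rw [qbin_eq n (c - s) (by omega) (a - (s : ℂ)) (a - (c : ℂ)) (by push_cast [hsc]; ring),
    qbin_eq n s (by omega) (b + (s : ℂ)) b rfl]
  have e' : a + b - (c : ℂ) + 2 = a - c + b + 2 := by ring
  rw [e']

end
end

section
/- For all a, b ∈ ℂ \ (1/2)ℤ, the R-matrix map R_{a,b} : V^a ⊗ V^b → V^b ⊗ V^a intertwines the coproduct actions: R_{a,b} ∘ (E_a ⊗ K_b + K_a^{−1} ⊗ E_b) = (E_b ⊗ K_a + K_b^{−1} ⊗ E_a) ∘ R_{a,b}, R_{a,b} ∘ (F_a ⊗ K_b + K_a^{−1} ⊗ F_b) = (F_b ⊗ K_a + K_b^{−1} ⊗ F_a) ∘ R_{a,b}, and R_{a,b} ∘ (K_a ⊗ K_b) = (K_b ⊗ K_a) ∘ R_{a,b}. -/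
open Complex Finset Filter
open scoped Matrix Kronecker Real

noncomputable section

section helpers

lemma qint_zero (n : ℕ) : qint n 0 = 0 := by simp [qint, qn_zero]

lemma qn_self (n : ℕ) (hn : 2 ≤ n) : qn n (n : ℂ) = 0 := by
  have h : (n : ℂ) ≠ 0 := by
    have : n ≠ 0 := by omega
    exact_mod_cast this
  unfold qn xic
  have h1 : (Real.pi * Complex.I * (n : ℂ) / n : ℂ) = Real.pi * Complex.I := by field_simp
  have h2 : (Real.pi * Complex.I * (-(n : ℂ)) / n : ℂ) = -(Real.pi * Complex.I) := by field_simp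
  rw [h1, h2, Complex.exp_neg, Complex.exp_pi_mul_I]
  norm_num

lemma qn_ne_zero_s3 (n : ℕ) (j : ℕ) (hj : 1 ≤ j) (hjn : j < n) : qn n (j : ℂ) ≠ 0 := by
  have h : (n : ℂ) ≠ 0 := by
    have : n ≠ 0 := by omega
    exact_mod_cast this
  have hpi : (Real.pi : ℂ) ≠ 0 := by exact_mod_cast Real.pi_ne_zero
  have hI := Complex.I_ne_zero
  intro h0
  unfold qn xic at h0
  rw [sub_eq_zero, Complex.exp_eq_exp_iff_exists_int] at h0
  obtain ⟨t, ht⟩ := h0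
  field_simp at ht
  have h3 : (j : ℂ) = n * t := by linear_combination ht / 2
  have h4 : (j : ℤ) = n * t := by exact_mod_cast h3
  have h5 : (n : ℤ) ∣ j := ⟨t, h4⟩
  have h6 : n ∣ j := by exact_mod_cast h5
  have := Nat.le_of_dvd (by omega) h6
  omega

/-- falling product. -/
def PP (n : ℕ) (x : ℂ) (m : ℕ) : ℂ := ∏ j ∈ Finset.range m, qn n (x - (j : ℂ))

lemma PP_zero (n : ℕ) (x : ℂ) : PP n x 0 = 1 := by simp [PP]

lemma PP_succ (n : ℕ) (x : ℂ) (m : ℕ) : PP n x (m + 1) = PP n x m * qn n (x - m) := by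
  simp [PP, Finset.prod_range_succ]

lemma PP_succ' (n : ℕ) (x : ℂ) (m : ℕ) : PP n x (m + 1) = qn n x * PP n (x - 1) m := by
  unfold PP
  rw [Finset.prod_range_succ', mul_comm]
  congr 1
  · simp
  · refine Finset.prod_congr rfl fun j _ => ?_
    congr 1
    push_cast
    ring

lemma PP_nat (n : ℕ) (m : ℕ) : PP n (m : ℂ) m = qfac n m := by
  induction m with
  | zero => simp [PP, qfac]
  | succ k ih =>
    rw [PP_succ']
    have : ((k + 1 : ℕ) : ℂ) - 1 = k := by push_cast; ring
    rw [this, ih]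
    simp [qfac, Finset.prod_range_succ, mul_comm]

lemma qfac_succ (n m : ℕ) : qfac n (m + 1) = qfac n m * qn n ((m : ℂ) + 1) := by
  simp [qfac, Finset.prod_range_succ]

lemma qfac_ne_zero (n m : ℕ) (hm : m < n) : qfac n m ≠ 0 := by
  unfold qfac
  rw [Finset.prod_ne_zero_iff]
  intro j hj
  rw [Finset.mem_range] at hj
  have := qn_ne_zero_s3 n (j + 1) (by omega) (by omega)
  push_cast at this
  exact this

lemma qbin_eq_s3 (n : ℕ) (x : ℂ) (m : ℕ) (hm : m < n) :
    qbin n x (x - m) = PP n x m / qfac n m := by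
  have hx : x - (x - (m : ℂ)) = m := by ring
  have h : ∃ k : ℕ, k < n ∧ x - (x - (m : ℂ)) = (k : ℂ) := ⟨m, hm, hx⟩
  unfold qbin
  rw [dif_pos h]
  have hc : h.choose = m := by
    have h2 : (h.choose : ℂ) = (m : ℂ) := h.choose_spec.2.symm.trans hx
    exact_mod_cast h2
  rw [hc, hx, Finset.prod_div_distrib, ← PP_nat]
  rfl

/-- simplified entry -/
def rr (n : ℕ) (a b u v : ℂ) (m : ℕ) : ℂ :=
  xic n (2 * (a - u) * (b - v) - (m : ℂ) * (a - b - u + v) - (m : ℂ) * ((m : ℂ) + 1) / 2) *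
    PP n u m * PP n (2 * b - v) m / qfac n m

def Rn (n : ℕ) (a b : ℂ) (h k u v : ℕ) : ℂ :=
  if h + k = u + v ∧ v ≤ h then rr n a b u v (h - v) else 0

lemma Rmat_eq (n : ℕ) (a b : ℂ) (h k u v : Fin n) :
    Rmat n a b (h, k) (u, v) = Rn n a b h k u v := by
  unfold Rmat Rn rr
  simp only [Matrix.of_apply]
  split_ifs with hc
  · have hm : (h : ℕ) - (v : ℕ) < n := by omega
    rw [qbin_eq_s3 n _ _ hm, qbin_eq_s3 n _ _ hm]
    have := qfac_ne_zero n _ hm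
    field_simp
  · rfl

lemma E_left (n : ℕ) (G : ℕ → ℂ) (j : Fin n) :
    ∑ i : Fin n, G i * Emat n i j = G ((j : ℕ) - 1) * qint n ((j : ℕ) : ℂ) := by
  obtain ⟨j, hj⟩ := j
  rcases j with _ | j
  · simp [Emat, qint_zero]
  · rw [Finset.sum_eq_single (⟨j, by omega⟩ : Fin n)]
    · simp [Emat]
    · intro i _ hi
      have : j ≠ (i : ℕ) := fun h => hi (Fin.ext h.symm)
      simp [Emat, this]
    · simp

lemma E_right (n : ℕ) (hn : 2 ≤ n) (G : ℕ → ℂ) (h : Fin n) :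
    ∑ i : Fin n, Emat n h i * G i = qint n (((h : ℕ) : ℂ) + 1) * G ((h : ℕ) + 1) := by
  obtain ⟨h, hh⟩ := h
  by_cases h1 : h + 1 < n
  · rw [Finset.sum_eq_single (⟨h + 1, h1⟩ : Fin n)]
    · simp [Emat]
    · intro i _ hi
      have : (i : ℕ) ≠ h + 1 := fun h => hi (Fin.ext h)
      simp [Emat, this]
    · simp
  · have h2 : n = h + 1 := by omega
    have h3 : qint n ((h : ℂ) + 1) = 0 := by
      have := qn_self n hn
      unfold qint
      have h4 : ((h : ℂ) + 1) = (n : ℂ) := by rw [h2]; push_cast; ring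
      rw [h4, this, zero_div]
    simp only [h3, zero_mul]
    refine Finset.sum_eq_zero fun i _ => ?_
    have : (i : ℕ) ≠ h + 1 := by omega
    simp [Emat, this]

lemma F_left (n : ℕ) (a : ℂ) (G : ℕ → ℂ) (j : Fin n) :
    ∑ i : Fin n, G i * Fmat n a i j =
      if (j : ℕ) + 1 < n then G ((j : ℕ) + 1) * qint n (2 * a - ((j : ℕ) : ℂ)) else 0 := by
  obtain ⟨j, hj⟩ := j
  split_ifs with h1
  · rw [Finset.sum_eq_single (⟨j + 1, h1⟩ : Fin n)]
    · simp [Fmat]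
    · intro i _ hi
      have : (i : ℕ) ≠ j + 1 := fun h => hi (Fin.ext h)
      simp [Fmat, this]
    · simp
  · refine Finset.sum_eq_zero fun i _ => ?_
    simp only at h1
    have : (i : ℕ) ≠ j + 1 := by omega
    simp [Fmat, this]

lemma F_right (n : ℕ) (a : ℂ) (G : ℕ → ℂ) (h : Fin n) :
    ∑ i : Fin n, Fmat n a h i * G i =
      if 1 ≤ (h : ℕ) then qint n (2 * a - ((h : ℕ) : ℂ) + 1) * G ((h : ℕ) - 1) else 0 := by
  obtain ⟨h, hh⟩ := h
  rcases h with _ | h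
  · simp [Fmat]
  · rw [Finset.sum_eq_single (⟨h, by omega⟩ : Fin n)]
    · simp [Fmat]
      left
      congr 1
      ring
    · intro i _ hi
      have : h ≠ (i : ℕ) := fun h => hi (Fin.ext h.symm)
      simp [Fmat, this]
    · simp

lemma K_left (n : ℕ) (a : ℂ) (G : Fin n → ℂ) (j : Fin n) :
    ∑ i : Fin n, G i * Kmat n a i j = G j * xic n (a - ((j : ℕ) : ℂ)) := by
  simp [Kmat]

lemma K_right (n : ℕ) (a : ℂ) (G : Fin n → ℂ) (j : Fin n) :
    ∑ i : Fin n, Kmat n a j i * G i = xic n (a - ((j : ℕ) : ℂ)) * G j := by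
  simp [Kmat]

lemma Ki_left (n : ℕ) (a : ℂ) (G : Fin n → ℂ) (j : Fin n) :
    ∑ i : Fin n, G i * Kinvmat n a i j = G j * xic n (-(a - ((j : ℕ) : ℂ))) := by
  simp [Kinvmat]

lemma Ki_right (n : ℕ) (a : ℂ) (G : Fin n → ℂ) (j : Fin n) :
    ∑ i : Fin n, Kinvmat n a j i * G i = xic n (-(a - ((j : ℕ) : ℂ))) * G j := by
  simp [Kinvmat]

lemma mul_kron (n : ℕ) (M : Matrix (Fin n × Fin n) (Fin n × Fin n) ℂ)
    (A B : Matrix (Fin n) (Fin n) ℂ) (p : Fin n × Fin n) (u v : Fin n) :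
    (M * (A ⊗ₖ B)) p (u, v) = ∑ i, (∑ j, M p (i, j) * B j v) * A i u := by
  simp only [Matrix.mul_apply, Fintype.sum_prod_type, Matrix.kroneckerMap_apply, Finset.sum_mul]
  refine Finset.sum_congr rfl fun i _ => Finset.sum_congr rfl fun j _ => ?_
  ring

lemma kron_mul (n : ℕ) (M : Matrix (Fin n × Fin n) (Fin n × Fin n) ℂ)
    (A B : Matrix (Fin n) (Fin n) ℂ) (q : Fin n × Fin n) (h k : Fin n) :
    ((A ⊗ₖ B) * M) (h, k) q = ∑ i, A h i * (∑ j, B k j * M (i, j) q) := by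
  simp only [Matrix.mul_apply, Fintype.sum_prod_type, Matrix.kroneckerMap_apply, Finset.mul_sum]
  refine Finset.sum_congr rfl fun i _ => Finset.sum_congr rfl fun j _ => ?_
  ring

lemma E_scalar (n : ℕ) (a b u v m : ℂ) :
    xic n (2 * (a - (u - 1)) * (b - v) - m * (a - b - (u - 1) + v) - m * (m + 1) / 2)
        * xic n (b - v) * qn n (m + 1)
      + xic n (2 * (a - u) * (b - (v - 1)) - (m + 1) * (a - b - u + (v - 1))
          - (m + 1) * ((m + 1) + 1) / 2) * qn n v * xic n (-(a - u)) * qn n (2 * b - v + 1)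
    = qn n (v + m + 1) * (xic n (a - (u - m - 1)) * xic n (2 * (a - u) * (b - v)
          - (m + 1) * (a - b - u + v) - (m + 1) * ((m + 1) + 1) / 2)) * qn n (2 * b - v - m)
      + xic n (-(b - (v + m))) * xic n (2 * (a - u) * (b - v) - m * (a - b - u + v)
          - m * (m + 1) / 2) * qn n (m + 1) := by
  simp only [qn, sub_mul, mul_sub, ← xic_add]
  ring_nf

lemma F_scalar (n : ℕ) (a b u v m : ℂ) :
    xic n (2 * (a - (u + 1)) * (b - v) - (m + 1) * (a - b - (u + 1) + v)
          - (m + 1) * ((m + 1) + 1) / 2) * xic n (b - v) * qn n (2 * a - u) * qn n (u + 1)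
      + xic n (2 * (a - u) * (b - (v + 1)) - m * (a - b - u + (v + 1)) - m * (m + 1) / 2)
         * xic n (-(a - u)) * qn n (m + 1)
    = xic n (a - (u - m)) * xic n (2 * (a - u) * (b - v) - m * (a - b - u + v)
          - m * (m + 1) / 2) * qn n (m + 1)
      + xic n (-(b - (v + m + 1))) * qn n (2 * a - (u - m) + 1) * xic n (2 * (a - u) * (b - v)
          - (m + 1) * (a - b - u + v) - (m + 1) * ((m + 1) + 1) / 2) * qn n (u - m) := by
  simp only [qn, sub_mul, mul_sub, ← xic_add]
  ring_nf

lemma E_core (n m : ℕ) (hn : 2 ≤ n) (hm : m + 1 < n) (a b u v : ℂ) :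
    rr n a b (u - 1) v m * xic n (b - v) * qint n u
      + rr n a b u (v - 1) (m + 1) * qint n v * xic n (-(a - u))
    = qint n (v + m + 1) * (xic n (a - (u - m - 1)) * rr n a b u v (m + 1))
      + xic n (-(b - (v + m))) * (qint n (u - m) * rr n a b u v m) := by
  have hS := E_scalar n a b u v m
  have p1 : PP n u m * qn n (u - m) = qn n u * PP n (u - 1) m := by
    rw [← PP_succ', PP_succ]
  have p2 : PP n (2 * b - (v - 1)) (m + 1) = qn n (2 * b - v + 1) * PP n (2 * b - v) m := by
    rw [PP_succ']
    congr 2 <;> ring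
  have f0 := qfac_ne_zero n m (by omega)
  have f2 := qn_ne_zero_s3 n 1 le_rfl (by omega)
  push_cast at f2
  have f3 := qn_ne_zero_s3 n (m + 1) (by omega) (by omega)
  push_cast at f3
  unfold rr qint
  rw [p2, PP_succ, PP_succ, qfac_succ]
  push_cast
  generalize PP n u m = D at *
  generalize PP n (u - 1) m = D' at *
  generalize PP n (2 * b - v) m = B at *
  generalize qfac n m = Q at *
  generalize xic n (2 * (a - (u - 1)) * (b - v) - m * (a - b - (u - 1) + v) - m * (m + 1) / 2) = X1 at *
  generalize xic n (2 * (a - u) * (b - (v - 1)) - (m + 1) * (a - b - u + (v - 1))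
          - (m + 1) * ((m + 1) + 1) / 2) = X2 at *
  generalize xic n (2 * (a - u) * (b - v)
          - (m + 1) * (a - b - u + v) - (m + 1) * ((m + 1) + 1) / 2) = X3 at *
  generalize xic n (2 * (a - u) * (b - v) - m * (a - b - u + v)
          - m * (m + 1) / 2) = X4 at *
  generalize xic n (b - v) = Y1 at *
  generalize xic n (-(a - u)) = Y2 at *
  generalize xic n (a - (u - m - 1)) = Y3 at *
  generalize xic n (-(b - (v + m))) = Y4 at *
  generalize qn n u = q1 at *
  generalize qn n v = q2 at *
  generalize qn n (v + m + 1) = q3 at *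
  generalize qn n (u - m) = q4 at *
  generalize qn n (2 * b - v + 1) = q5 at *
  generalize qn n (2 * b - v - m) = q6 at *
  generalize qn n ((m : ℂ) + 1) = q7 at *
  generalize qn n 1 = q8 at *
  field_simp
  linear_combination B * D * q4 * hS - X1 * Y1 * q7 * B * p1

lemma E_core0 (n : ℕ) (a b u v : ℂ) :
    rr n a b u (v - 1) 0 * xic n (-(a - u)) = xic n (a - u) * rr n a b u v 0 := by
  unfold rr
  simp only [PP_zero, qfac, Finset.range_zero, Finset.prod_empty, mul_one, div_one, ← xic_add]
  congr 1
  push_cast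
  ring

lemma F_core (n m : ℕ) (hn : 2 ≤ n) (hm : m + 1 < n) (a b u v : ℂ) :
    rr n a b (u + 1) v (m + 1) * xic n (b - v) * qint n (2 * a - u)
      + rr n a b u (v + 1) m * qint n (2 * b - v) * xic n (-(a - u))
    = qint n (2 * b - (v + m)) * (xic n (a - (u - m)) * rr n a b u v m)
      + xic n (-(b - (v + m + 1))) * (qint n (2 * a - (u - m) + 1) * rr n a b u v (m + 1)) := by
  have hS := F_scalar n a b u v m
  have p1 : PP n (u + 1) (m + 1) = qn n (u + 1) * PP n u m := by
    rw [PP_succ', add_sub_cancel_right]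
  have p2 : PP n (2 * b - v) m * qn n (2 * b - v - m)
      = qn n (2 * b - v) * PP n (2 * b - (v + 1)) m := by
    rw [← PP_succ, PP_succ']
    congr 2
    ring
  have f0 := qfac_ne_zero n m (by omega)
  have f2 := qn_ne_zero_s3 n 1 le_rfl (by omega)
  push_cast at f2
  have f3 := qn_ne_zero_s3 n (m + 1) (by omega) (by omega)
  push_cast at f3
  have s : 2 * b - (v + m) = 2 * b - v - m := by ring
  unfold rr qint
  rw [p1, PP_succ, PP_succ, qfac_succ, s]
  push_cast
  generalize PP n u m = D at *
  generalize PP n (2 * b - v) m = B at *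
  generalize PP n (2 * b - (v + 1)) m = B' at *
  generalize qfac n m = Q at *
  generalize xic n (2 * (a - (u + 1)) * (b - v) - (m + 1) * (a - b - (u + 1) + v)
          - (m + 1) * ((m + 1) + 1) / 2) = X1 at *
  generalize xic n (2 * (a - u) * (b - (v + 1)) - m * (a - b - u + (v + 1)) - m * (m + 1) / 2)
    = X2 at *
  generalize xic n (2 * (a - u) * (b - v)
          - (m + 1) * (a - b - u + v) - (m + 1) * ((m + 1) + 1) / 2) = X3 at *
  generalize xic n (2 * (a - u) * (b - v) - m * (a - b - u + v)
          - m * (m + 1) / 2) = X4 at *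
  generalize xic n (b - v) = Y1 at *
  generalize xic n (-(a - u)) = Y2 at *
  generalize xic n (a - (u - m)) = Y3 at *
  generalize xic n (-(b - (v + m + 1))) = Y4 at *
  generalize qn n (2 * a - u) = q1 at *
  generalize qn n (u + 1) = q2 at *
  generalize qn n (2 * a - (u - m) + 1) = q3 at *
  generalize qn n (u - m) = q4 at *
  generalize qn n (2 * b - v) = q5 at *
  generalize qn n (2 * b - v - m) = q6 at *
  generalize qn n ((m : ℂ) + 1) = q7 at *
  generalize qn n 1 = q8 at *
  field_simp
  linear_combination B * D * q6 * hS - X2 * Y2 * q7 * D * p2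

lemma F_core0 (n : ℕ) (a b u v : ℂ) :
    rr n a b (u + 1) v 0 * xic n (b - v) = xic n (-(b - v)) * rr n a b u v 0 := by
  unfold rr
  simp only [PP_zero, qfac, Finset.range_zero, Finset.prod_empty, mul_one, div_one, ← xic_add]
  congr 1
  push_cast
  ring

lemma E_nat (n : ℕ) (hn : 2 ≤ n) (a b : ℂ) (h k u v : ℕ) (hh : h < n) (hk : k < n)
    (hu : u < n) (hv : v < n) :
    Rn n a b h k (u - 1) v * xic n (b - (v : ℂ)) * qint n (u : ℂ)
      + Rn n a b h k u (v - 1) * qint n (v : ℂ) * xic n (-(a - (u : ℂ)))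
    = qint n ((h : ℂ) + 1) * (xic n (a - (k : ℂ)) * Rn n a b (h + 1) k u v)
      + xic n (-(b - (h : ℂ))) * (qint n ((k : ℂ) + 1) * Rn n a b h (k + 1) u v) := by
  by_cases hc : h + k + 1 = u + v
  · by_cases h1 : h + 1 < v
    · have e1 : Rn n a b h k (u - 1) v = 0 := if_neg (by omega)
      have e2 : Rn n a b h k u (v - 1) = 0 := if_neg (by omega)
      have e3 : Rn n a b (h + 1) k u v = 0 := if_neg (by omega)
      have e4 : Rn n a b h (k + 1) u v = 0 := if_neg (by omega)
      simp [e1, e2, e3, e4]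
    · by_cases h2 : v = h + 1
      · subst h2
        obtain rfl : u = k := by omega
        have e1 : Rn n a b h u (u - 1) (h + 1) = 0 := if_neg (by omega)
        have e2 : Rn n a b h u u (h + 1 - 1) = rr n a b u h 0 := by
          simp [Rn, add_comm]
        have e3 : Rn n a b (h + 1) u u (h + 1) = rr n a b u ((h : ℂ) + 1) 0 := by
          simp [Rn, add_comm]
        have e4 : Rn n a b h (u + 1) u (h + 1) = 0 := if_neg (by omega)
        have := E_core0 n a b u ((h : ℂ) + 1)
        rw [add_sub_cancel_right] at this
        rw [e1, e2, e3, e4]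
        push_cast
        linear_combination qint n ((h : ℂ) + 1) * this
      · obtain ⟨m, rfl⟩ : ∃ m, h = v + m := ⟨h - v, by omega⟩
        obtain rfl : u = k + m + 1 := by omega
        have e1 : Rn n a b (v + m) k (k + m + 1 - 1) v = rr n a b (k + m : ℕ) v m := by
          unfold Rn
          rw [if_pos (by omega)]
          congr 1
          omega
        have e2 : Rn n a b (v + m) k (k + m + 1) (v - 1) * qint n (v : ℂ)
            = rr n a b (k + m + 1 : ℕ) ((v : ℂ) - 1) (m + 1) * qint n (v : ℂ) := by
          rcases v with _ | v
          · simp [qint_zero]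
          · congr 1
            unfold Rn
            rw [if_pos (by omega)]
            congr 1
            · push_cast [Nat.add_sub_cancel]
              ring
            · omega
        have e3 : Rn n a b (v + m + 1) k (k + m + 1) v = rr n a b (k + m + 1 : ℕ) v (m + 1) := by
          unfold Rn
          rw [if_pos (by omega)]
          congr 1
          omega
        have e4 : Rn n a b (v + m) (k + 1) (k + m + 1) v = rr n a b (k + m + 1 : ℕ) v m := by
          unfold Rn
          rw [if_pos (by omega)]
          congr 1
          omega
        rw [e1, e2, e3, e4]
        have := E_core n m hn (by omega) a b (k + m + 1 : ℕ) v
        have s1 : ((k + m + 1 : ℕ) : ℂ) - 1 = ((k + m : ℕ) : ℂ) := by push_cast; ring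
        have s2 : ((k + m + 1 : ℕ) : ℂ) - m - 1 = (k : ℂ) := by push_cast; ring
        have s3 : ((k + m + 1 : ℕ) : ℂ) - m = (k : ℂ) + 1 := by push_cast; ring
        have s4 : ((v + m : ℕ) : ℂ) = (v : ℂ) + m := by push_cast; ring
        rw [s1, s2, s3] at this
        rw [s4]
        exact this
  · have e1 : Rn n a b h k (u - 1) v * xic n (b - (v : ℂ)) * qint n (u : ℂ) = 0 := by
      rcases u with _ | u
      · simp [qint_zero]
      · have : Rn n a b h k (u + 1 - 1) v = 0 := if_neg (by omega)
        rw [this, zero_mul, zero_mul]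
    have e2 : Rn n a b h k u (v - 1) * qint n (v : ℂ) = 0 := by
      rcases v with _ | v
      · simp [qint_zero]
      · have : Rn n a b h k u (v + 1 - 1) = 0 := if_neg (by omega)
        rw [this, zero_mul]
    have e3 : Rn n a b (h + 1) k u v = 0 := if_neg (by omega)
    have e4 : Rn n a b h (k + 1) u v = 0 := if_neg (by omega)
    simp [e1, e2, e3, e4]

lemma F_nat (n : ℕ) (hn : 2 ≤ n) (a b : ℂ) (h k u v : ℕ) (hh : h < n) (hk : k < n)
    (hu : u < n) (hv : v < n) :
    (if u + 1 < n then Rn n a b h k (u + 1) v * xic n (b - (v : ℂ)) * qint n (2 * a - (u : ℂ))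
        else 0)
      + (if v + 1 < n then Rn n a b h k u (v + 1) * qint n (2 * b - (v : ℂ)) else 0)
        * xic n (-(a - (u : ℂ)))
    = (if 1 ≤ h then qint n (2 * b - (h : ℂ) + 1) * (xic n (a - (k : ℂ)) * Rn n a b (h - 1) k u v)
        else 0)
      + xic n (-(b - (h : ℂ))) *
        (if 1 ≤ k then qint n (2 * a - (k : ℂ) + 1) * Rn n a b h (k - 1) u v else 0) := by
  by_cases hc : h + k = u + v + 1
  · by_cases h1 : h < v
    · have e1 : Rn n a b h k (u + 1) v = 0 := if_neg (by omega)
      have e2 : Rn n a b h k u (v + 1) = 0 := if_neg (by omega)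
      have e3 : Rn n a b (h - 1) k u v = 0 := if_neg (by omega)
      have e4 : Rn n a b h (k - 1) u v = 0 := if_neg (by omega)
      simp [e1, e2, e3, e4]
    · by_cases h2 : h = v
      · subst h2
        obtain rfl : k = u + 1 := by omega
        have e1 : Rn n a b h (u + 1) (u + 1) h = rr n a b ((u : ℂ) + 1) h 0 := by
          simp [Rn, add_comm]
        have e2 : Rn n a b h (u + 1) u (h + 1) = 0 := if_neg (by omega)
        have e3 : (if 1 ≤ h then qint n (2 * b - (h : ℂ) + 1) *
            (xic n (a - ((u + 1 : ℕ) : ℂ)) * Rn n a b (h - 1) (u + 1) u h) else 0) = 0 := by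
          split_ifs with h3
          · have : Rn n a b (h - 1) (u + 1) u h = 0 := if_neg (by omega)
            simp [this]
          · rfl
        have e4 : Rn n a b h (u + 1 - 1) u h = rr n a b u h 0 := by
          simp [Rn, add_comm]
        have := F_core0 n a b u h
        have s : 2 * a - ((u + 1 : ℕ) : ℂ) + 1 = 2 * a - u := by push_cast; ring
        rw [e1, e2, e3, e4, if_pos hk, if_pos (by omega : 1 ≤ u + 1), s]
        simp only [zero_mul, ite_self]
        linear_combination qint n (2 * a - u) * this
      · obtain ⟨m, rfl⟩ : ∃ m, h = v + m + 1 := ⟨h - v - 1, by omega⟩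
        obtain rfl : u = k + m := by omega
        have e1 : (if k + m + 1 < n then Rn n a b (v + m + 1) k (k + m + 1) v * xic n (b - (v : ℂ))
              * qint n (2 * a - ((k + m : ℕ) : ℂ)) else 0)
            = rr n a b (((k + m : ℕ) : ℂ) + 1) v (m + 1) * xic n (b - (v : ℂ))
              * qint n (2 * a - ((k + m : ℕ) : ℂ)) := by
          split_ifs with h3
          · congr 2
            unfold Rn
            rw [if_pos (by omega)]
            congr 1
            · push_cast; ring
            · omega
          · have h4 : ((k + m : ℕ) : ℂ) + 1 = (n : ℂ) := by
              have : k + m + 1 = n := by omega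
              exact_mod_cast this
            rw [h4]
            simp [rr, PP_succ', qn_self n hn]
        have e2 : Rn n a b (v + m + 1) k (k + m) (v + 1)
            = rr n a b (k + m : ℕ) ((v : ℂ) + 1) m := by
          unfold Rn
          rw [if_pos (by omega)]
          congr 1
          · push_cast; ring
          · omega
        have e3 : Rn n a b (v + m + 1 - 1) k (k + m) v = rr n a b (k + m : ℕ) v m := by
          unfold Rn
          rw [if_pos (by omega)]
          congr 1
          omega
        have e4 : (if 1 ≤ k then qint n (2 * a - (k : ℂ) + 1)
              * Rn n a b (v + m + 1) (k - 1) (k + m) v else 0)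
            = qint n (2 * a - (k : ℂ) + 1) * rr n a b (k + m : ℕ) v (m + 1) := by
          split_ifs with h3
          · congr 1
            unfold Rn
            rw [if_pos (by omega)]
            congr 1
            omega
          · obtain rfl : k = 0 := by omega
            simp [rr, PP_succ, qn_zero]
        rw [e1, e2, e3, e4, if_pos (by omega : v + 1 < n), if_pos (by omega : 1 ≤ v + m + 1)]
        have := F_core n m hn (by omega) a b (k + m : ℕ) v
        have s2 : ((k + m : ℕ) : ℂ) - m = (k : ℂ) := by push_cast; ring
        have s3 : 2 * b - ((v + m + 1 : ℕ) : ℂ) + 1 = 2 * b - ((v : ℂ) + m) := by push_cast; ring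
        have s4 : ((v + m + 1 : ℕ) : ℂ) = (v : ℂ) + m + 1 := by push_cast; ring
        rw [s2] at this
        rw [s3, s4]
        exact this
  · have e1 : Rn n a b h k (u + 1) v = 0 := if_neg (by omega)
    have e2 : Rn n a b h k u (v + 1) = 0 := if_neg (by omega)
    have e3 : (if 1 ≤ h then qint n (2 * b - (h : ℂ) + 1) *
        (xic n (a - (k : ℂ)) * Rn n a b (h - 1) k u v) else 0) = 0 := by
      split_ifs with h3
      · have : Rn n a b (h - 1) k u v = 0 := if_neg (by omega)
        simp [this]
      · rfl
    have e4 : (if 1 ≤ k then qint n (2 * a - (k : ℂ) + 1) * Rn n a b h (k - 1) u v else 0) = 0 := by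
      split_ifs with h3
      · have : Rn n a b h (k - 1) u v = 0 := if_neg (by omega)
        simp [this]
      · rfl
    simp [e1, e2, e3, e4]

end helpers

theorem Rmat_intertwines_coproduct (n : ℕ) (hn : 2 ≤ n) (a b : ℂ)
    (ha : NotHalfInt a) (hb : NotHalfInt b) :
    (Rmat n a b * (Emat n ⊗ₖ Kmat n b + Kinvmat n a ⊗ₖ Emat n)
        = (Emat n ⊗ₖ Kmat n a + Kinvmat n b ⊗ₖ Emat n) * Rmat n a b) ∧
    (Rmat n a b * (Fmat n a ⊗ₖ Kmat n b + Kinvmat n a ⊗ₖ Fmat n b)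
        = (Fmat n b ⊗ₖ Kmat n a + Kinvmat n b ⊗ₖ Fmat n a) * Rmat n a b) ∧
    (Rmat n a b * (Kmat n a ⊗ₖ Kmat n b) = (Kmat n b ⊗ₖ Kmat n a) * Rmat n a b) := by
  refine ⟨?_, ?_, ?_⟩
  · ext ⟨h, k⟩ ⟨u, v⟩
    rw [Matrix.mul_add, Matrix.add_mul, Matrix.add_apply, Matrix.add_apply]
    rw [mul_kron, mul_kron, kron_mul, kron_mul]
    simp only [K_left, K_right, Ki_left, Ki_right, Rmat_eq]
    rw [E_left n (fun i => Rn n a b h k i v * xic n (b - ((v : ℕ) : ℂ))),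
      E_left n (fun j => Rn n a b h k u j),
      E_right n hn (fun i => xic n (a - ((k : ℕ) : ℂ)) * Rn n a b i k u v),
      E_right n hn (fun j => Rn n a b h j u v)]
    obtain ⟨h, hh⟩ := h
    obtain ⟨k, hk⟩ := k
    obtain ⟨u, hu⟩ := u
    obtain ⟨v, hv⟩ := v
    exact E_nat n hn a b h k u v hh hk hu hv
  · ext ⟨h, k⟩ ⟨u, v⟩
    rw [Matrix.mul_add, Matrix.add_mul, Matrix.add_apply, Matrix.add_apply]
    rw [mul_kron, mul_kron, kron_mul, kron_mul]
    simp only [K_left, K_right, Ki_left, Ki_right, Rmat_eq]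
    rw [F_left n a (fun i => Rn n a b h k i v * xic n (b - ((v : ℕ) : ℂ))),
      F_left n b (fun j => Rn n a b h k u j),
      F_right n b (fun i => xic n (a - ((k : ℕ) : ℂ)) * Rn n a b i k u v),
      F_right n a (fun j => Rn n a b h j u v)]
    obtain ⟨h, hh⟩ := h
    obtain ⟨k, hk⟩ := k
    obtain ⟨u, hu⟩ := u
    obtain ⟨v, hv⟩ := v
    exact F_nat n hn a b h k u v hh hk hu hv
  · ext ⟨h, k⟩ ⟨u, v⟩
    rw [mul_kron, kron_mul]
    simp only [K_left, K_right, Rmat_eq]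
    by_cases hc : (h : ℕ) + (k : ℕ) = (u : ℕ) + (v : ℕ)
    · have hc' : ((h : ℕ) : ℂ) + ((k : ℕ) : ℂ) = ((u : ℕ) : ℂ) + ((v : ℕ) : ℂ) := by
        exact_mod_cast hc
      rw [mul_assoc, ← mul_assoc (xic n _), ← xic_add, ← xic_add, mul_comm]
      congr 2
      linear_combination hc'
    · simp [Rn, hc]

end
end
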